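/- arXiv:2309.05816 — 2 statements merged into one kernel-verified Lean document; each statement's English description precedes it below -/
import Mathlib

section
/- For every distortion function d ∈ F_D and every utility function u ∈ F_U, the probability distortion T_d and the utility transform T^u commute: T_d ∘ T^u = T^u ∘ T_d as maps from M to M. -/
/-!
For increasing `g`, the right limit `g(x+)` is the value at `x` of the only right-continuous `h`
with `g x ≤ h x` for all `x` and `h x ≤ g y` for all `x < y`. Taking `g = d ∘ F`, it is enough that
`T^u` preserves such a sandwich: from `d (F x) ≤ G x` and `G x ≤ d (F y)` for `x < y` one gets the
same inequalities with `T^u F` and `T^u G` in place of `F` and `G`.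

Since `u` is increasing and continuous, `{u ≤ x}` is empty, all of `ℝ` or a closed half-line
`(-∞, c]`, and `T^u F x` is accordingly `0`, `1` or `F c`, while `d` fixes `0` and `1`. For `x < y`
the half-lines `{u ≤ x} = (-∞, a]` and `{u ≤ y} = (-∞, b]` satisfy `a < b`, because `u a < y`
persists slightly to the right of `a`.
-/

open MeasureTheory Filter Topology Set

noncomputable section

/-- The set of cdfs of compactly supported probability distributions on ℝ:
increasing, right-continuous, equal to `0` for all sufficiently small `x` and
equal to `1` for all sufficiently large `x`. -/
def mSet : Set (ℝ → ℝ) :=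
  {F | Monotone F ∧ (∀ x, ContinuousWithinAt F (Set.Ici x) x) ∧
    (∃ a, ∀ x ≤ a, F x = 0) ∧ (∃ b, ∀ x, b ≤ x → F x = 1)}

/-- The set of cdfs of all probability distributions on ℝ: increasing,
right-continuous, with limit `0` at `-∞` and limit `1` at `+∞`. -/
def m0Set : Set (ℝ → ℝ) :=
  {F | Monotone F ∧ (∀ x, ContinuousWithinAt F (Set.Ici x) x) ∧
    Tendsto F atBot (𝓝 0) ∧ Tendsto F atTop (𝓝 1)}

/-- A utility function: increasing (non-strict) and continuous. -/
def IsUF (u : ℝ → ℝ) : Prop := Monotone u ∧ Continuous u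

/-- An increasing and left-continuous function on ℝ. -/
def IsLeftCtsIncr (u : ℝ → ℝ) : Prop :=
  Monotone u ∧ ∀ x, ContinuousWithinAt u (Set.Iic x) x

/-- A distortion function: an increasing function `d : [0,1] → [0,1]` with
`d 0 = 0` and `d 1 = 1` (values outside `[0,1]` are irrelevant). -/
def IsDF (d : ℝ → ℝ) : Prop :=
  MonotoneOn d (Set.Icc 0 1) ∧ d 0 = 0 ∧ d 1 = 1

/-- Right-continuity of a distortion function on `[0,1)`. -/
def DFRightCts (d : ℝ → ℝ) : Prop :=
  ∀ x ∈ Set.Ico (0:ℝ) 1, ContinuousWithinAt d (Set.Ioi x) x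

/-- A distortion function with moreover `d(0+) = 0` and `d(1-) = 1`. -/
def IsDFhat (d : ℝ → ℝ) : Prop :=
  IsDF d ∧ Tendsto d (𝓝[>] (0:ℝ)) (𝓝 0) ∧ Tendsto d (𝓝[<] (1:ℝ)) (𝓝 1)

/-- The probability distortion generated by `d`:  `T_d F x = (d ∘ F)(x+)`,
the right limit of `d ∘ F` at `x`. -/
noncomputable def distortT (d F : ℝ → ℝ) : ℝ → ℝ :=
  fun x => Function.rightLim (d ∘ F) x

/-- The utility transform `T^u`: it maps a cdf `F` to the cdf of the
pushforward under `u` of the probability measure with cdf `F`. -/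
noncomputable def utilityT (u F : ℝ → ℝ) : ℝ → ℝ := by
  classical
  exact
    if h : Monotone F ∧ ∀ x, ContinuousWithinAt F (Set.Ici x) x then
      fun x => ((StieltjesFunction.measure ⟨F, h.1, h.2⟩).map u (Set.Iic x)).toReal
    else F

/-- Left quantile `F_L^{-1}(p) = inf {x | F x ≥ p}`. -/
noncomputable def leftQ (F : ℝ → ℝ) (p : ℝ) : ℝ := sInf {x | p ≤ F x}

/-- Right quantile `F_R^{-1}(p) = inf {x | F x > p}`. -/
noncomputable def rightQ (F : ℝ → ℝ) (p : ℝ) : ℝ := sInf {x | p < F x}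

section Order

lemma exists_eq_Iic_of_isLowerSet_of_isClosed {α : Type*} [ConditionallyCompleteLinearOrder α]
    [TopologicalSpace α] [OrderTopology α] {s : Set α} (hs : IsLowerSet s) (hcl : IsClosed s)
    (hne : s.Nonempty) (huniv : s ≠ univ) : ∃ c, s = Iic c := by
  obtain ⟨t, ht⟩ := (ne_univ_iff_exists_notMem s).1 huniv
  have hbdd : BddAbove s := ⟨t, fun z hz ↦ le_of_not_ge fun htz ↦ ht (hs htz hz)⟩
  exact ⟨sSup s, Subset.antisymm (fun _ hz ↦ le_csSup hbdd hz)
    fun _ hz ↦ hs hz (hcl.csSup_mem hne hbdd)⟩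

variable {α β : Type*} [LinearOrder α] [TopologicalSpace α] [OrderTopology α]

lemma rightLim_eq_of_le_of_forall_lt_le [LinearOrder β] [TopologicalSpace β] [OrderTopology β]
    {f g : α → β} {x : α} [(𝓝[>] x).NeBot] (hfg : ∀ y, f y ≤ g y) (hgf : ∀ y, x < y → g x ≤ f y)
    (hg : ContinuousWithinAt g (Ioi x) x) : Function.rightLim f x = g x :=
  rightLim_eq_of_tendsto <| tendsto_of_tendsto_of_tendsto_of_le_of_le' tendsto_const_nhds hg
    (eventually_mem_nhdsWithin.mono hgf) (.of_forall hfg)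

lemma lt_of_preimage_Iic_eq_Iic [DenselyOrdered α] [NoMaxOrder α] [LinearOrder β]
    [TopologicalSpace β] [OrderClosedTopology β] {u : α → β} (hu : Continuous u) {x y : β} {a b : α}
    (hxy : x < y) (ha : u ⁻¹' Iic x = Iic a) (hb : u ⁻¹' Iic y = Iic b) : a < b := by
  have hua : u a < y := lt_of_le_of_lt (ha.ge self_mem_Iic) hxy
  have hev : ∀ᶠ z in 𝓝[>] a, u z < y :=
    (hu.continuousAt.eventually_lt_const hua).filter_mono nhdsWithin_le_nhds
  obtain ⟨z, hzy, haz⟩ := (hev.and eventually_mem_nhdsWithin).exists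
  exact lt_of_lt_of_le haz (hb.le hzy.le)

end Order

lemma IsUF.exists_preimage_Iic_eq_Iic {u : ℝ → ℝ} (hu : IsUF u) {x : ℝ}
    (hne : (u ⁻¹' Iic x).Nonempty) (huniv : u ⁻¹' Iic x ≠ univ) : ∃ c, u ⁻¹' Iic x = Iic c :=
  exists_eq_Iic_of_isLowerSet_of_isClosed ((isLowerSet_Iic x).preimage hu.1)
    (isClosed_Iic.preimage hu.2) hne huniv

section CDF

open ProbabilityTheory

variable {F u : ℝ → ℝ} {x : ℝ}

lemma cdf_mem_m0Set (μ : Measure ℝ) : ⇑(cdf μ) ∈ m0Set :=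
  ⟨monotone_cdf μ, (cdf μ).right_continuous, tendsto_cdf_atBot μ, tendsto_cdf_atTop μ⟩

lemma exists_cdf_eq_of_mem_m0Set (hF : F ∈ m0Set) :
    ∃ μ : Measure ℝ, IsProbabilityMeasure μ ∧ ⇑(cdf μ) = F := by
  let f : StieltjesFunction ℝ := ⟨F, hF.1, hF.2.1⟩
  exact ⟨f.measure, f.isProbabilityMeasure hF.2.2.1 hF.2.2.2,
    congrArg _ (cdf_measure_stieltjesFunction f hF.2.2.1 hF.2.2.2)⟩

lemma mem_Icc_of_mem_m0Set (hF : F ∈ m0Set) (x : ℝ) : F x ∈ Icc (0 : ℝ) 1 :=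
  ⟨hF.1.le_of_tendsto hF.2.2.1 x, hF.1.ge_of_tendsto hF.2.2.2 x⟩

lemma mSet_subset_m0Set : mSet ⊆ m0Set := by
  rintro F ⟨hmono, hcont, ⟨a, ha⟩, ⟨b, hb⟩⟩
  exact ⟨hmono, hcont,
    tendsto_const_nhds.congr' ((eventually_le_atBot a).mono fun x hx ↦ (ha x hx).symm),
    tendsto_const_nhds.congr' ((eventually_ge_atTop b).mono fun x hx ↦ (hb x hx).symm)⟩

lemma utilityT_cdf (μ : Measure ℝ) [IsProbabilityMeasure μ] (hu : Measurable u) :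
    utilityT u (cdf μ) = cdf (μ.map u) := by
  have : IsProbabilityMeasure (μ.map u) := Measure.isProbabilityMeasure_map hu.aemeasurable
  funext x
  rw [utilityT, dif_pos ⟨(cdf μ).mono, (cdf μ).right_continuous⟩, cdf_eq_real, measureReal_def]
  exact congrArg (fun ν : Measure ℝ ↦ (ν.map u (Iic x)).toReal) (measure_cdf μ)

lemma utilityT_mem_m0Set (hu : Measurable u) (hF : F ∈ m0Set) : utilityT u F ∈ m0Set := by
  obtain ⟨μ, _, rfl⟩ := exists_cdf_eq_of_mem_m0Set hF
  exact utilityT_cdf μ hu ▸ cdf_mem_m0Set _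

lemma utilityT_cdf_apply (μ : Measure ℝ) [IsProbabilityMeasure μ] (hu : Measurable u) (x : ℝ) :
    utilityT u (cdf μ) x = μ.real (u ⁻¹' Iic x) := by
  have : IsProbabilityMeasure (μ.map u) := Measure.isProbabilityMeasure_map hu.aemeasurable
  rw [utilityT_cdf μ hu, cdf_eq_real, map_measureReal_apply hu measurableSet_Iic]

lemma utilityT_eq_zero (hu : Measurable u) (hF : F ∈ m0Set) (h : u ⁻¹' Iic x = ∅) :
    utilityT u F x = 0 := by
  obtain ⟨μ, _, rfl⟩ := exists_cdf_eq_of_mem_m0Set hF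
  rw [utilityT_cdf_apply μ hu, h, measureReal_empty]

lemma utilityT_eq_one (hu : Measurable u) (hF : F ∈ m0Set) (h : u ⁻¹' Iic x = univ) :
    utilityT u F x = 1 := by
  obtain ⟨μ, _, rfl⟩ := exists_cdf_eq_of_mem_m0Set hF
  rw [utilityT_cdf_apply μ hu, h, probReal_univ]

lemma utilityT_eq_apply (hu : Measurable u) (hF : F ∈ m0Set) {c : ℝ} (h : u ⁻¹' Iic x = Iic c) :
    utilityT u F x = F c := by
  obtain ⟨μ, _, rfl⟩ := exists_cdf_eq_of_mem_m0Set hF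
  rw [utilityT_cdf_apply μ hu, h, cdf_eq_real]

end CDF

section Distortion

variable {d F : ℝ → ℝ}

lemma IsDF.mapsTo_Icc (hd : IsDF d) : MapsTo d (Icc 0 1) (Icc 0 1) := by
  simpa only [hd.2.1, hd.2.2] using hd.1.mapsTo_Icc

lemma IsDF.monotone_comp (hd : IsDF d) (hF : F ∈ m0Set) : Monotone (d ∘ F) :=
  fun _ _ hxy ↦ hd.1 (mem_Icc_of_mem_m0Set hF _) (mem_Icc_of_mem_m0Set hF _) (hF.1 hxy)

lemma le_distortT (hd : IsDF d) (hF : F ∈ m0Set) (x : ℝ) : d (F x) ≤ distortT d F x :=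
  (hd.monotone_comp hF).le_rightLim le_rfl

lemma distortT_le (hd : IsDF d) (hF : F ∈ m0Set) {x y : ℝ} (hxy : x < y) :
    distortT d F x ≤ d (F y) :=
  (hd.monotone_comp hF).rightLim_le hxy

lemma distortT_mem_mSet (hd : IsDF d) (hF : F ∈ mSet) : distortT d F ∈ mSet := by
  have hF₀ := mSet_subset_m0Set hF
  have hmono := hd.monotone_comp hF₀
  obtain ⟨-, -, ⟨a, ha⟩, ⟨b, hb⟩⟩ := hF
  refine ⟨hmono.rightLim, hmono.stieltjesFunction.right_continuous,
    ⟨a - 1, fun x hx ↦ le_antisymm ?_ ?_⟩, ⟨b, fun x hx ↦ le_antisymm ?_ ?_⟩⟩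
  · simpa only [ha a le_rfl, hd.2.1] using distortT_le hd hF₀ (show x < a by linarith)
  · simpa only [ha x (by linarith), hd.2.1] using le_distortT hd hF₀ x
  · simpa only [hb (x + 1) (by linarith), hd.2.2] using distortT_le hd hF₀ (lt_add_one x)
  · simpa only [hb x hx, hd.2.2] using le_distortT hd hF₀ x

end Distortion

section Commute

variable {d u F G : ℝ → ℝ}

lemma apply_utilityT_le_utilityT (hd : IsDF d) (hu : IsUF u) (hF : F ∈ m0Set) (hG : G ∈ m0Set)
    (h : ∀ c, d (F c) ≤ G c) (x : ℝ) : d (utilityT u F x) ≤ utilityT u G x := by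
  have hum := hu.2.measurable
  rcases (u ⁻¹' Iic x).eq_empty_or_nonempty with hempty | hne
  · rw [utilityT_eq_zero hum hF hempty, utilityT_eq_zero hum hG hempty, hd.2.1]
  by_cases huniv : u ⁻¹' Iic x = univ
  · rw [utilityT_eq_one hum hF huniv, utilityT_eq_one hum hG huniv, hd.2.2]
  obtain ⟨c, hc⟩ := hu.exists_preimage_Iic_eq_Iic hne huniv
  rw [utilityT_eq_apply hum hF hc, utilityT_eq_apply hum hG hc]
  exact h c

lemma utilityT_le_apply_utilityT (hd : IsDF d) (hu : IsUF u) (hF : F ∈ m0Set) (hG : G ∈ m0Set)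
    (h : ∀ a b, a < b → G a ≤ d (F b)) {x y : ℝ} (hxy : x < y) :
    utilityT u G x ≤ d (utilityT u F y) := by
  have hum := hu.2.measurable
  rcases (u ⁻¹' Iic x).eq_empty_or_nonempty with hempty | hne
  · rw [utilityT_eq_zero hum hG hempty]
    exact (hd.mapsTo_Icc (mem_Icc_of_mem_m0Set (utilityT_mem_m0Set hum hF) y)).1
  by_cases huniv : u ⁻¹' Iic y = univ
  · rw [utilityT_eq_one hum hF huniv, hd.2.2]
    exact (mem_Icc_of_mem_m0Set (utilityT_mem_m0Set hum hG) x).2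
  have hsub : u ⁻¹' Iic x ⊆ u ⁻¹' Iic y := preimage_mono (Iic_subset_Iic.2 hxy.le)
  obtain ⟨a, ha⟩ :=
    hu.exists_preimage_Iic_eq_Iic hne fun hx ↦ huniv (univ_subset_iff.1 (hx ▸ hsub))
  obtain ⟨b, hb⟩ := hu.exists_preimage_Iic_eq_Iic (hne.mono hsub) huniv
  rw [utilityT_eq_apply hum hG ha, utilityT_eq_apply hum hF hb]
  exact h a b (lt_of_preimage_Iic_eq_Iic hu.2 hxy ha hb)

end Commute

theorem stmt1_general (d u F : ℝ → ℝ) (hd : IsDF d) (hu : IsUF u) (hF : F ∈ m0Set)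
    (hdF : distortT d F ∈ m0Set) : distortT d (utilityT u F) = utilityT u (distortT d F) := by
  have hright := (utilityT_mem_m0Set hu.2.measurable hdF).2.1
  funext x
  exact rightLim_eq_of_le_of_forall_lt_le
    (apply_utilityT_le_utilityT hd hu hF hdF (le_distortT hd hF))
    (fun y hxy ↦ utilityT_le_apply_utilityT hd hu hF hdF (fun a b hab ↦ distortT_le hd hF hab) hxy)
    ((hright x).mono Ioi_subset_Ici_self)

/-- For every distortion function `d` and every utility function `u`, the
probability distortion `T_d` and the utility transform `T^u` commute as maps
from `M` to `M`. -/
theorem stmt1 (d u : ℝ → ℝ) (hd : IsDF d) (hu : IsUF u) :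
    ∀ F ∈ mSet, distortT d (utilityT u F) = utilityT u (distortT d F) := by
  exact fun F hF ↦ stmt1_general d u F hd hu (mSet_subset_m0Set hF)
    (mSet_subset_m0Set (distortT_mem_mSet hd hF))
end
end

section
/- Let T : M → M be a monotone distributional transform. Then T commutes with the set 𝒟^R of probability distortions generated by right-continuous distortion functions (i.e., 𝒟^R ∘ T = T ∘ 𝒟^R as sets of maps) if and only if T = T_d ∘ T^u for some increasing left-continuous u : ℝ → ℝ and some strictly increasing continuous distortion function d ∈ F_D. -/
/-!
On left quantile functions, `T_d` acts by reparametrising the level `p` and `T^u` acts by composing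
with `u`. So `T = T_ψ ∘ T^u` amounts to the quantile rule `Q_{T F} (ψ p) = u (Q_F p)`, and `T^u`
commutes with every right-continuous `T_d`; conjugating by `ψ` gives one implication.

Conversely, if `T` commutes with `𝒟^R`, then it maps point masses to point masses, `δ_x ↦ δ_{u x}`,
because they are the laws of the form `1_{[1, ∞)} ∘ F`. Restricting `T` to two-point laws on
`a ≤ b` and evaluating at `x` gives `ψ : [0, 1] → [0, 1]` such that every relation
`T_{d'} ∘ T = T ∘ T_d` becomes `d' ∘ ψ = ψ ∘ d`. The indicators `d` of `[p, 1]` make `ψ` strictly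
monotone as soon as `ψ 0 ≠ ψ 1`. If `ψ` were decreasing, `d` would be left- instead of
right-continuous for some `d'`; hence `u` is increasing. If `ψ` is increasing, prescribing
`d' (ψ (1/2))` shows that `ψ` is onto, and then `d' = 1_{[ψ p, 1]}` for `d = 1_{[p, 1]}`, which is
the quantile rule. If `u` is constant, every `T F` is the same point mass and `ψ = id` will do.
Left-continuity of `u` is inherited from the quantile functions of `T F` for uniform `F`.
-/

open MeasureTheory Filter Topology Set

noncomputable section

lemma biTotal_of_imp {α β : Type*} {R S : α → β → Prop} (hR : Relator.BiTotal R)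
    (hRS : ∀ a b, R a b → S a b) : Relator.BiTotal S :=
  ⟨fun a => (hR.1 a).imp (hRS a), fun b => (hR.2 b).imp fun a => hRS a b⟩

lemma continuousOn_of_monotoneOn_of_surjOn {α β : Type*} [LinearOrder α] [TopologicalSpace α]
    [OrderTopology α] [LinearOrder β] [TopologicalSpace β] [OrderTopology β] [DenselyOrdered β]
    {f : α → β} {s : Set α} {t : Set β} [s.OrdConnected] [t.OrdConnected]
    (hmono : MonotoneOn f s) (hmaps : MapsTo f s t) (hsurj : SurjOn f s t) :
    ContinuousOn f s := by
  have hcont : Continuous (hmaps.restrict f s t) :=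
    Monotone.continuous_of_surjective (fun x y h => hmono x.2 y.2 h)
      (hmaps.restrict_surjective_iff.2 hsurj)
  exact continuousOn_iff_continuous_domRestrict.2 (continuous_subtype_val.comp hcont)

/-! ### Distortion functions -/

lemma IsDF.mapsTo {d : ℝ → ℝ} (hd : IsDF d) : MapsTo d (Icc 0 1) (Icc 0 1) := fun _ ht =>
  ⟨hd.2.1.symm.trans_le (hd.1 (left_mem_Icc.2 zero_le_one) ht ht.1),
    (hd.1 ht (right_mem_Icc.2 zero_le_one) ht.2).trans_eq hd.2.2⟩

lemma mem_Icc_of_mem_mSet {F : ℝ → ℝ} (hF : F ∈ mSet) (x : ℝ) : F x ∈ Icc (0 : ℝ) 1 := by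
  obtain ⟨hmono, -, ⟨a, ha⟩, ⟨b, hb⟩⟩ := hF
  constructor
  · rw [← ha (min a x) (min_le_left _ _)]
    exact hmono (min_le_right _ _)
  · rw [← hb (max b x) (le_max_left _ _)]
    exact hmono (le_max_right _ _)

lemma dfRightCts_iff_continuousWithinAt_Icc {d : ℝ → ℝ} :
    DFRightCts d ↔ ∀ x ∈ Icc (0 : ℝ) 1, ContinuousWithinAt d (Icc x 1) x := by
  constructor
  · intro h x hx
    rcases hx.2.eq_or_lt with rfl | hx1
    · rw [Icc_self]
      exact continuousWithinAt_singleton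
    · rw [continuousWithinAt_Icc_iff_Ici hx1, ← continuousWithinAt_Ioi_iff_Ici]
      exact h x ⟨hx.1, hx1⟩
  · intro h x hx
    rw [continuousWithinAt_Ioi_iff_Ici, ← continuousWithinAt_Icc_iff_Ici hx.2]
    exact h x ⟨hx.1, hx.2.le⟩

/-- The right-continuous distortion functions, `F_D^R` in the paper. -/
abbrev RightCtsDF : Type := {d : ℝ → ℝ // IsDF d ∧ DFRightCts d}

namespace RightCtsDF

lemma continuousWithinAt (d : RightCtsDF) {x : ℝ} (hx : x ∈ Icc (0 : ℝ) 1) :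
    ContinuousWithinAt d.1 (Icc x 1) x :=
  dfRightCts_iff_continuousWithinAt_Icc.1 d.2.2 x hx

/-- Composition of right-continuous distortion functions. -/
def comp (d e : RightCtsDF) : RightCtsDF :=
  ⟨d.1 ∘ e.1,
    ⟨d.2.1.1.comp e.2.1.1 e.2.1.mapsTo, by simp [e.2.1.2.1, d.2.1.2.1],
      by simp [e.2.1.2.2, d.2.1.2.2]⟩,
    dfRightCts_iff_continuousWithinAt_Icc.2 fun x hx =>
      (d.continuousWithinAt (e.2.1.mapsTo hx)).comp (e.continuousWithinAt hx) fun y hy =>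
        have hy' : y ∈ Icc (0 : ℝ) 1 := ⟨hx.1.trans hy.1, hy.2⟩
        ⟨e.2.1.1 hx hy' hy.1, (e.2.1.mapsTo hy').2⟩⟩

/-- The cdf of a law on `(0, 1]`, seen as a right-continuous distortion function. -/
def ofCdf {F : ℝ → ℝ} (hF : F ∈ mSet) (h0 : F 0 = 0) (h1 : F 1 = 1) : RightCtsDF :=
  ⟨F, ⟨hF.1.monotoneOn _, h0, h1⟩, fun x _ => (hF.2.1 x).mono Ioi_subset_Ici_self⟩

lemma continuousWithinAt_comp (d : RightCtsDF) {F : ℝ → ℝ} (hF : F ∈ mSet) (x : ℝ) :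
    ContinuousWithinAt (d.1 ∘ F) (Ici x) x :=
  (d.continuousWithinAt (mem_Icc_of_mem_mSet hF x)).comp (hF.2.1 x) fun y hy =>
    ⟨hF.1 hy, (mem_Icc_of_mem_mSet hF y).2⟩

lemma comp_mem_mSet (d : RightCtsDF) {F : ℝ → ℝ} (hF : F ∈ mSet) : d.1 ∘ F ∈ mSet := by
  refine ⟨fun x y h => d.2.1.1 (mem_Icc_of_mem_mSet hF x) (mem_Icc_of_mem_mSet hF y) (hF.1 h),
    d.continuousWithinAt_comp hF, ?_, ?_⟩
  · exact hF.2.2.1.imp fun a ha x hx => by simp [ha x hx, d.2.1.2.1]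
  · exact hF.2.2.2.imp fun b hb x hx => by simp [hb x hx, d.2.1.2.2]

lemma distortT_eq_comp (d : RightCtsDF) {F : ℝ → ℝ} (hF : F ∈ mSet) :
    distortT d.1 F = d.1 ∘ F :=
  funext fun x => (d.continuousWithinAt_comp hF x).rightLim_eq

end RightCtsDF

/-- The strictly increasing continuous distortion functions, that is, the increasing
homeomorphisms of `[0, 1]`. -/
def IsHomeoDF (ψ : ℝ → ℝ) : Prop :=
  IsDF ψ ∧ StrictMonoOn ψ (Icc 0 1) ∧ ContinuousOn ψ (Icc 0 1)

lemma isHomeoDF_id : IsHomeoDF id :=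
  ⟨⟨monotoneOn_id, rfl, rfl⟩, strictMono_id.strictMonoOn _, continuousOn_id⟩

lemma isHomeoDF_of_surjOn {ψ : ℝ → ℝ} (hmono : StrictMonoOn ψ (Icc 0 1))
    (hmaps : MapsTo ψ (Icc 0 1) (Icc 0 1)) (hsurj : SurjOn ψ (Icc 0 1) (Icc 0 1)) :
    IsHomeoDF ψ := by
  have h0 : (0 : ℝ) ∈ Icc (0 : ℝ) 1 := left_mem_Icc.2 zero_le_one
  have h1 : (1 : ℝ) ∈ Icc (0 : ℝ) 1 := right_mem_Icc.2 zero_le_one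
  refine ⟨⟨hmono.monotoneOn, ?_, ?_⟩, hmono,
    continuousOn_of_monotoneOn_of_surjOn hmono.monotoneOn hmaps hsurj⟩
  · obtain ⟨t, ht, hψt⟩ := hsurj h0
    exact le_antisymm ((hmono.monotoneOn h0 ht ht.1).trans_eq hψt) (hmaps h0).1
  · obtain ⟨t, ht, hψt⟩ := hsurj h1
    exact le_antisymm (hmaps h1).2 (hψt.symm.trans_le (hmono.monotoneOn ht h1 ht.2))

namespace IsHomeoDF

variable {ψ : ℝ → ℝ}

/-- A strictly increasing continuous distortion function as an element of `F_D^R`. -/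
def toRightCtsDF (hψ : IsHomeoDF ψ) : RightCtsDF :=
  ⟨ψ, hψ.1, dfRightCts_iff_continuousWithinAt_Icc.2 fun x hx =>
    (hψ.2.2 x hx).mono (Icc_subset_Icc_left hx.1)⟩

lemma surjOn (hψ : IsHomeoDF ψ) : SurjOn ψ (Icc 0 1) (Icc 0 1) := by
  have h := intermediate_value_Icc zero_le_one hψ.2.2
  rwa [hψ.1.2.1, hψ.1.2.2] at h

lemma mem_Ioc_iff (hψ : IsHomeoDF ψ) {p : ℝ} (hp : p ∈ Icc (0 : ℝ) 1) :
    ψ p ∈ Ioc (0 : ℝ) 1 ↔ p ∈ Ioc (0 : ℝ) 1 := by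
  have hpos : 0 < ψ p ↔ 0 < p := by
    simpa only [hψ.1.2.1] using hψ.2.1.lt_iff_lt (left_mem_Icc.2 zero_le_one) hp
  exact and_congr hpos (iff_of_true (hψ.1.mapsTo hp).2 hp.2)

lemma exists_invOn (hψ : IsHomeoDF ψ) :
    ∃ φ, IsHomeoDF φ ∧ InvOn φ ψ (Icc 0 1) (Icc 0 1) := by
  have hbij : BijOn ψ (Icc 0 1) (Icc 0 1) := ⟨hψ.1.mapsTo, hψ.2.1.injOn, hψ.surjOn⟩
  have hinv := hbij.invOn_invFunOn
  have hmaps := hψ.surjOn.mapsTo_invFunOn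
  refine ⟨_, isHomeoDF_of_surjOn (fun s hs t ht hst => ?_) hmaps
    (hinv.1.surjOn hψ.1.mapsTo), hinv⟩
  rwa [← hψ.2.1.lt_iff_lt (hmaps hs) (hmaps ht), hinv.2 hs, hinv.2 ht]

end IsHomeoDF

/-! ### Point masses, two-point laws and uniform laws -/

/-- The cdf of the point mass at `c`. For `c ∈ (0, 1]` it is also the distortion function that
collapses a law to its left `c`-quantile. -/
def stepFn (c : ℝ) : ℝ → ℝ := fun x => if c ≤ x then 1 else 0

/-- The cdf of the law `t δ_a + (1 - t) δ_b`. -/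
def twoPoint (a b t : ℝ) : ℝ → ℝ := fun x => t * stepFn a x + (1 - t) * stepFn b x

/-- The cdf of the uniform law on `[c, c + 1]`. -/
def uniformCdf (c : ℝ) : ℝ → ℝ := fun x => max 0 (min 1 (x - c))

lemma stepFn_of_le {c x : ℝ} (h : c ≤ x) : stepFn c x = 1 := if_pos h

lemma stepFn_of_lt {c x : ℝ} (h : x < c) : stepFn c x = 0 := if_neg h.not_ge

lemma monotone_stepFn (c : ℝ) : Monotone (stepFn c) := by
  intro x y h
  unfold stepFn
  split_ifs <;> linarith

lemma continuousWithinAt_stepFn (c x : ℝ) : ContinuousWithinAt (stepFn c) (Ici x) x := by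
  rcases le_or_gt c x with h | h
  · exact continuousWithinAt_const.congr (fun y hy => stepFn_of_le (h.trans hy)) (stepFn_of_le h)
  · have hzero : (fun _ => (0 : ℝ)) =ᶠ[𝓝 x] stepFn c := by
      filter_upwards [Iio_mem_nhds h] with y hy using (stepFn_of_lt hy).symm
    exact (continuousAt_const.congr hzero).continuousWithinAt

lemma stepFn_mem_mSet (c : ℝ) : stepFn c ∈ mSet :=
  ⟨monotone_stepFn c, continuousWithinAt_stepFn c,
    ⟨c - 1, fun _ hx => stepFn_of_lt (hx.trans_lt (sub_one_lt c))⟩, c, fun _ hx => stepFn_of_le hx⟩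

lemma twoPoint_mem_mSet (a b : ℝ) {t : ℝ} (ht : t ∈ Icc (0 : ℝ) 1) : twoPoint a b t ∈ mSet := by
  refine ⟨fun x y h => ?_, fun x => ?_, ⟨min a b - 1, fun x hx => ?_⟩, ⟨max a b, fun x hx => ?_⟩⟩
  · exact add_le_add (mul_le_mul_of_nonneg_left (monotone_stepFn a h) ht.1)
      (mul_le_mul_of_nonneg_left (monotone_stepFn b h) (sub_nonneg.2 ht.2))
  · exact ((continuousWithinAt_stepFn a x).const_mul t).add
      ((continuousWithinAt_stepFn b x).const_mul (1 - t))
  · have hlt : x < min a b := hx.trans_lt (sub_one_lt _)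
    simp [twoPoint, stepFn_of_lt (lt_min_iff.1 hlt).1, stepFn_of_lt (lt_min_iff.1 hlt).2]
  · simp [twoPoint, stepFn_of_le (max_le_iff.1 hx).1, stepFn_of_le (max_le_iff.1 hx).2]

lemma twoPoint_zero (a b : ℝ) : twoPoint a b 0 = stepFn b := by
  funext x
  simp [twoPoint]

lemma twoPoint_one (a b : ℝ) : twoPoint a b 1 = stepFn a := by
  funext x
  simp [twoPoint]

lemma IsDF.comp_twoPoint {d : ℝ → ℝ} (hd : IsDF d) {a b : ℝ} (hab : a ≤ b) (t : ℝ) :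
    d ∘ twoPoint a b t = twoPoint a b (d t) := by
  funext x
  rcases lt_or_ge x a with ha | ha
  · simp [twoPoint, stepFn_of_lt ha, stepFn_of_lt (ha.trans_le hab), hd.2.1]
  rcases lt_or_ge x b with hb | hb
  · simp [twoPoint, stepFn_of_le ha, stepFn_of_lt hb]
  · simp [twoPoint, stepFn_of_le ha, stepFn_of_le hb, hd.2.2]

lemma IsDF.comp_stepFn {d : ℝ → ℝ} (hd : IsDF d) (c : ℝ) : d ∘ stepFn c = stepFn c := by
  simpa only [twoPoint_one, hd.2.2] using hd.comp_twoPoint (le_refl c) 1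

lemma uniformCdf_mem_mSet (c : ℝ) : uniformCdf c ∈ mSet := by
  refine ⟨fun x y h => ?_, fun x => ?_, ⟨c, fun x hx => ?_⟩, ⟨c + 1, fun x hx => ?_⟩⟩
  · unfold uniformCdf
    gcongr
  · unfold uniformCdf
    fun_prop
  · exact max_eq_left ((min_le_right _ _).trans (sub_nonpos.2 hx))
  · rw [uniformCdf, min_eq_left (by linarith), max_eq_right zero_le_one]

lemma le_uniformCdf_iff (c : ℝ) {p : ℝ} (hp : p ∈ Ioc (0 : ℝ) 1) (x : ℝ) :
    p ≤ uniformCdf c x ↔ c + p ≤ x := by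
  rw [uniformCdf, le_max_iff, le_min_iff, le_sub_iff_add_le, add_comm p c]
  simp only [hp.1.not_ge, hp.2, false_or, true_and]

lemma uniformCdf_zero_of_mem {t : ℝ} (ht : t ∈ Icc (0 : ℝ) 1) : uniformCdf 0 t = t := by
  rw [uniformCdf, sub_zero, min_eq_right ht.2, max_eq_right ht.1]

/-- The indicator of `[p, 1]` as a right-continuous distortion function. -/
def RightCtsDF.step {p : ℝ} (hp : p ∈ Ioc (0 : ℝ) 1) : RightCtsDF :=
  ofCdf (stepFn_mem_mSet p) (stepFn_of_lt hp.1) (stepFn_of_le hp.2)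

lemma RightCtsDF.exists_apply_eq {w y : ℝ} (hw : w ∈ Ioo (0 : ℝ) 1) (hy : y ∈ Icc (0 : ℝ) 1) :
    ∃ d : RightCtsDF, d.1 w = y := by
  refine ⟨ofCdf (twoPoint_mem_mSet w 1 hy) ?_ ?_, ?_⟩
  · simp [twoPoint, stepFn_of_lt hw.1, stepFn_of_lt one_pos]
  · simp [twoPoint, stepFn_of_le hw.2.le, stepFn_of_le le_rfl]
  · simp [ofCdf, twoPoint, stepFn_of_le le_rfl, stepFn_of_lt hw.2]

lemma IsHomeoDF.eqOn_stepFn {ψ d' : ℝ → ℝ} (hψ : IsHomeoDF ψ) {p : ℝ} (hp : p ∈ Icc (0 : ℝ) 1)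
    (h : EqOn (d' ∘ ψ) (ψ ∘ stepFn p) (Icc 0 1)) : EqOn d' (stepFn (ψ p)) (Icc 0 1) := by
  intro s hs
  obtain ⟨t, ht, rfl⟩ := hψ.surjOn hs
  rcases le_or_gt p t with hpt | htp
  · rw [stepFn_of_le (hψ.2.1.monotoneOn hp ht hpt)]
    exact (h ht).trans ((congrArg ψ (stepFn_of_le hpt)).trans hψ.1.2.2)
  · rw [stepFn_of_lt (hψ.2.1 ht hp htp)]
    exact (h ht).trans ((congrArg ψ (stepFn_of_lt htp)).trans hψ.1.2.1)

/-! ### Left quantiles -/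

lemma leftQ_eq_of_forall_le_iff {F : ℝ → ℝ} {p q : ℝ} (h : ∀ x, p ≤ F x ↔ q ≤ x) :
    leftQ F p = q := by
  have hset : {x | p ≤ F x} = Ici q := Set.ext h
  rw [leftQ, hset, csInf_Ici]

lemma leftQ_le_iff {F : ℝ → ℝ} (hF : F ∈ mSet) {p : ℝ} (hp : p ∈ Ioc (0 : ℝ) 1) {x : ℝ} :
    leftQ F p ≤ x ↔ p ≤ F x := by
  obtain ⟨hmono, hright, ⟨a, ha⟩, ⟨b, hb⟩⟩ := hF
  have hne : {x | p ≤ F x}.Nonempty := ⟨b, hp.2.trans_eq (hb b le_rfl).symm⟩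
  have hbdd : BddBelow {x | p ≤ F x} := ⟨a, fun x (hx : p ≤ F x) =>
    le_of_not_ge fun hxa => (hx.trans_eq (ha x hxa)).not_gt hp.1⟩
  have hattained : p ≤ F (leftQ F p) := by
    have hlim : Tendsto F (𝓝[>] leftQ F p) (𝓝 (F (leftQ F p))) :=
      (hright _).mono Ioi_subset_Ici_self
    refine ge_of_tendsto hlim ?_
    filter_upwards [self_mem_nhdsWithin] with y hy
    obtain ⟨z, hz, hzy⟩ := exists_lt_of_csInf_lt hne hy
    exact le_trans hz (hmono hzy.le)
  exact ⟨fun hx => hattained.trans (hmono hx), fun hx => csInf_le hbdd hx⟩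

lemma eq_of_leftQ_eq {F G : ℝ → ℝ} (hF : F ∈ mSet) (hG : G ∈ mSet)
    (h : ∀ p ∈ Ioc (0 : ℝ) 1, leftQ F p = leftQ G p) : F = G := by
  have hle : ∀ p ∈ Ioc (0 : ℝ) 1, ∀ x, p ≤ F x ↔ p ≤ G x := fun p hp x => by
    rw [← leftQ_le_iff hF hp, h p hp, leftQ_le_iff hG hp]
  funext x
  have hFx := mem_Icc_of_mem_mSet hF x
  have hGx := mem_Icc_of_mem_mSet hG x
  apply le_antisymm
  · rcases hFx.1.eq_or_lt with h0 | h0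
    · exact h0.symm.trans_le hGx.1
    · exact (hle _ ⟨h0, hFx.2⟩ x).1 le_rfl
  · rcases hGx.1.eq_or_lt with h0 | h0
    · exact h0.symm.trans_le hFx.1
    · exact (hle _ ⟨h0, hGx.2⟩ x).2 le_rfl

lemma leftQ_stepFn (c : ℝ) {p : ℝ} (hp : p ∈ Ioc (0 : ℝ) 1) : leftQ (stepFn c) p = c := by
  refine leftQ_eq_of_forall_le_iff fun x => ?_
  unfold stepFn
  split_ifs with h
  · exact iff_of_true hp.2 h
  · exact iff_of_false hp.1.not_ge h

lemma stepFn_injective : Function.Injective stepFn :=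
  Function.LeftInverse.injective (g := fun F => leftQ F 1) fun c =>
    leftQ_stepFn c (right_mem_Ioc.2 one_pos)

lemma leftQ_uniformCdf (c : ℝ) {p : ℝ} (hp : p ∈ Ioc (0 : ℝ) 1) :
    leftQ (uniformCdf c) p = c + p :=
  leftQ_eq_of_forall_le_iff (le_uniformCdf_iff c hp)

lemma stepFn_comp {F : ℝ → ℝ} (hF : F ∈ mSet) {p : ℝ} (hp : p ∈ Ioc (0 : ℝ) 1) :
    stepFn p ∘ F = stepFn (leftQ F p) := by
  funext x
  simp only [Function.comp, stepFn, leftQ_le_iff hF hp]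

lemma continuousWithinAt_leftQ {F : ℝ → ℝ} (hF : F ∈ mSet) {p : ℝ} (hp : p ∈ Ioc (0 : ℝ) 1) :
    ContinuousWithinAt (leftQ F) (Iic p) p := by
  have hbelow : ∀ᶠ r in 𝓝[≤] p, r ∈ Ioc 0 p := Ioc_mem_nhdsLE hp.1
  refine tendsto_order.2 ⟨fun y hy => ?_, fun y hy => ?_⟩
  · have hFy : F y < p := lt_of_not_ge fun h => hy.not_ge ((leftQ_le_iff hF hp).2 h)
    filter_upwards [hbelow, Ioc_mem_nhdsLE hFy] with r hr hFr
    exact lt_of_not_ge fun h => hFr.1.not_ge ((leftQ_le_iff hF ⟨hr.1, hr.2.trans hp.2⟩).1 h)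
  · filter_upwards [hbelow] with r hr
    have hpF : p ≤ F (leftQ F p) := (leftQ_le_iff hF hp).1 le_rfl
    exact ((leftQ_le_iff hF ⟨hr.1, hr.2.trans hp.2⟩).2 (hr.2.trans hpF)).trans_lt hy

lemma RightCtsDF.exists_leftQ_comp (d : RightCtsDF) {p : ℝ} (hp : p ∈ Ioc (0 : ℝ) 1) :
    ∃ r ∈ Ioc (0 : ℝ) 1, ∀ F ∈ mSet, leftQ (d.1 ∘ F) p = leftQ F r := by
  have hlevel : ∀ t ∈ Icc (0 : ℝ) 1, leftQ (d.1 ∘ uniformCdf 0) p ≤ t ↔ p ≤ d.1 t :=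
    fun t ht => by
      rw [leftQ_le_iff (d.comp_mem_mSet (uniformCdf_mem_mSet 0)) hp, Function.comp,
        uniformCdf_zero_of_mem ht]
  have hr : leftQ (d.1 ∘ uniformCdf 0) p ∈ Ioc (0 : ℝ) 1 := by
    constructor
    · rw [← not_le, hlevel 0 (left_mem_Icc.2 zero_le_one), d.2.1.2.1, not_le]
      exact hp.1
    · rw [hlevel 1 (right_mem_Icc.2 zero_le_one), d.2.1.2.2]
      exact hp.2
  refine ⟨_, hr, fun F hF => leftQ_eq_of_forall_le_iff fun x => ?_⟩
  rw [leftQ_le_iff hF hr, hlevel _ (mem_Icc_of_mem_mSet hF x), Function.comp]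

lemma IsHomeoDF.leftQ_comp {ψ F : ℝ → ℝ} (hψ : IsHomeoDF ψ) (hF : F ∈ mSet) {p : ℝ}
    (hp : p ∈ Icc (0 : ℝ) 1) : leftQ (ψ ∘ F) (ψ p) = leftQ F p := by
  simp only [leftQ, Function.comp, hψ.2.1.le_iff_le hp (mem_Icc_of_mem_mSet hF _)]

/-! ### The utility transform -/

/-- The law with cdf `F`. -/
def law {F : ℝ → ℝ} (hF : F ∈ mSet) : Measure ℝ :=
  StieltjesFunction.measure ⟨F, hF.1, hF.2.1⟩

section Law

variable {u F : ℝ → ℝ}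

lemma tendsto_atBot_of_mem_mSet (hF : F ∈ mSet) : Tendsto F atBot (𝓝 0) := by
  obtain ⟨a, ha⟩ := hF.2.2.1
  refine tendsto_const_nhds.congr' ?_
  filter_upwards [eventually_le_atBot a] with x hx using (ha x hx).symm

lemma tendsto_atTop_of_mem_mSet (hF : F ∈ mSet) : Tendsto F atTop (𝓝 1) := by
  obtain ⟨b, hb⟩ := hF.2.2.2
  refine tendsto_const_nhds.congr' ?_
  filter_upwards [eventually_ge_atTop b] with x hx using (hb x hx).symm

instance (hF : F ∈ mSet) : IsProbabilityMeasure (law hF) :=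
  StieltjesFunction.isProbabilityMeasure _ (tendsto_atBot_of_mem_mSet hF)
    (tendsto_atTop_of_mem_mSet hF)

lemma law_real_Iic (hF : F ∈ mSet) (x : ℝ) : (law hF).real (Iic x) = F x := by
  rw [Measure.real, law, StieltjesFunction.measure_Iic _ (tendsto_atBot_of_mem_mSet hF), sub_zero]
  exact ENNReal.toReal_ofReal (mem_Icc_of_mem_mSet hF x).1

lemma utilityT_eq_cdf (hu : Monotone u) (hF : F ∈ mSet) :
    utilityT u F = ProbabilityTheory.cdf ((law hF).map u) := by
  have := Measure.isProbabilityMeasure_map (μ := law hF) hu.measurable.aemeasurable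
  funext x
  rw [ProbabilityTheory.cdf_eq_real, utilityT, dif_pos ⟨hF.1, hF.2.1⟩]
  rfl

lemma utilityT_apply (hu : Monotone u) (hF : F ∈ mSet) (x : ℝ) :
    utilityT u F x = (law hF).real {y | u y ≤ x} := by
  have := Measure.isProbabilityMeasure_map (μ := law hF) hu.measurable.aemeasurable
  rw [utilityT_eq_cdf hu hF, ProbabilityTheory.cdf_eq_real,
    map_measureReal_apply hu.measurable measurableSet_Iic]
  rfl

lemma le_utilityT_of_le (hu : Monotone u) (hF : F ∈ mSet) {x y : ℝ} (h : u y ≤ x) :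
    F y ≤ utilityT u F x := by
  rw [utilityT_apply hu hF, ← law_real_Iic hF]
  exact measureReal_mono fun z hz => (hu hz).trans h

lemma utilityT_le_of_lt (hu : Monotone u) (hF : F ∈ mSet) {x y : ℝ} (h : x < u y) :
    utilityT u F x ≤ F y := by
  rw [utilityT_apply hu hF, ← law_real_Iic hF]
  exact measureReal_mono fun z (hz : u z ≤ x) => (hu.reflect_lt (hz.trans_lt h)).le

lemma utilityT_mem_mSet (hu : Monotone u) (hF : F ∈ mSet) : utilityT u F ∈ mSet := by
  obtain ⟨a, ha⟩ := hF.2.2.1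
  obtain ⟨b, hb⟩ := hF.2.2.2
  have hbounds : ∀ x, 0 ≤ utilityT u F x ∧ utilityT u F x ≤ 1 := fun x => by
    rw [utilityT_eq_cdf hu hF]
    exact ⟨ProbabilityTheory.cdf_nonneg _ x, ProbabilityTheory.cdf_le_one _ x⟩
  refine ⟨?_, ?_, ⟨u a - 1, fun x hx => ?_⟩, ⟨u b, fun x hx => ?_⟩⟩
  · rw [utilityT_eq_cdf hu hF]
    exact ProbabilityTheory.monotone_cdf _
  · rw [utilityT_eq_cdf hu hF]
    exact (ProbabilityTheory.cdf _).right_continuous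
  · have hlt : x < u a := hx.trans_lt (sub_one_lt _)
    exact le_antisymm ((utilityT_le_of_lt hu hF hlt).trans_eq (ha a le_rfl)) (hbounds x).1
  · exact le_antisymm (hbounds x).2 ((hb b le_rfl).symm.trans_le (le_utilityT_of_le hu hF hx))

lemma leftQ_utilityT (hu : IsLeftCtsIncr u) (hF : F ∈ mSet) {p : ℝ} (hp : p ∈ Ioc (0 : ℝ) 1) :
    leftQ (utilityT u F) p = u (leftQ F p) := by
  refine leftQ_eq_of_forall_le_iff fun x => ⟨fun hx => ?_, fun hx => ?_⟩
  · by_contra! hlt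
    have hleft : ∀ᶠ z in 𝓝[<] leftQ F p, x < u z :=
      ((hu.2 _).mono Iio_subset_Iic_self).eventually_const_lt hlt
    obtain ⟨z, hxz, hz⟩ := (hleft.and self_mem_nhdsWithin).exists
    have hpz : p ≤ F z := hx.trans (utilityT_le_of_lt hu.1 hF hxz)
    exact hz.not_ge ((leftQ_le_iff hF hp).2 hpz)
  · exact ((leftQ_le_iff hF hp).1 le_rfl).trans (le_utilityT_of_le hu.1 hF hx)

lemma utilityT_comp (hu : IsLeftCtsIncr u) (d : RightCtsDF) (hF : F ∈ mSet) :
    utilityT u (d.1 ∘ F) = d.1 ∘ utilityT u F := by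
  have hdF := d.comp_mem_mSet hF
  have huF := utilityT_mem_mSet hu.1 hF
  refine eq_of_leftQ_eq (utilityT_mem_mSet hu.1 hdF) (d.comp_mem_mSet huF) fun p hp => ?_
  obtain ⟨r, hr, hcomp⟩ := d.exists_leftQ_comp hp
  calc leftQ (utilityT u (d.1 ∘ F)) p = u (leftQ (d.1 ∘ F) p) := leftQ_utilityT hu hdF hp
    _ = u (leftQ F r) := by rw [hcomp F hF]
    _ = leftQ (utilityT u F) r := (leftQ_utilityT hu hF hr).symm
    _ = leftQ (d.1 ∘ utilityT u F) p := (hcomp _ huF).symm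

end Law

/-! ### Functions normalizing the right-continuous distortion functions -/

/-- `F_D^R ∘ ψ = ψ ∘ F_D^R` as sets of functions on `[0, 1]`. -/
def NormalizesDFs (ψ : ℝ → ℝ) : Prop :=
  Relator.BiTotal fun d d' : RightCtsDF => EqOn (d'.1 ∘ ψ) (ψ ∘ d.1) (Icc 0 1)

lemma IsHomeoDF.normalizesDFs {ψ : ℝ → ℝ} (hψ : IsHomeoDF ψ) : NormalizesDFs ψ := by
  obtain ⟨φ, hφ, hleft, hright⟩ := hψ.exists_invOn
  refine ⟨fun d => ⟨hψ.toRightCtsDF.comp (d.comp hφ.toRightCtsDF), fun t ht => ?_⟩,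
    fun d' => ⟨hφ.toRightCtsDF.comp (d'.comp hψ.toRightCtsDF), fun t ht => ?_⟩⟩
  · exact congrArg (ψ ∘ d.1) (hleft ht)
  · exact (hright (d'.2.1.mapsTo (hψ.1.mapsTo ht))).symm

namespace NormalizesDFs

variable {ψ : ℝ → ℝ}

lemma exists_separating (h : NormalizesDFs ψ) {s t : ℝ} (hs : s ∈ Icc (0 : ℝ) 1)
    (ht : t ∈ Icc (0 : ℝ) 1) (hst : s < t) :
    ∃ d : RightCtsDF, d.1 (ψ s) = ψ 0 ∧ d.1 (ψ t) = ψ 1 := by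
  obtain ⟨d, hd⟩ := h.1 (RightCtsDF.step ⟨hs.1.trans_lt hst, ht.2⟩)
  exact ⟨d, (hd hs).trans (congrArg ψ (stepFn_of_lt hst)),
    (hd ht).trans (congrArg ψ (stepFn_of_le le_rfl))⟩

lemma strictMonoOn (h : NormalizesDFs ψ) (hmaps : MapsTo ψ (Icc 0 1) (Icc 0 1))
    (h01 : ψ 0 < ψ 1) : StrictMonoOn ψ (Icc 0 1) := fun s hs t ht hst => by
  obtain ⟨d, hds, hdt⟩ := h.exists_separating hs ht hst
  exact lt_of_not_ge fun hle => h01.not_ge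
    (hdt.symm.trans_le ((d.2.1.1 (hmaps ht) (hmaps hs) hle).trans_eq hds))

lemma strictAntiOn (h : NormalizesDFs ψ) (hmaps : MapsTo ψ (Icc 0 1) (Icc 0 1))
    (h10 : ψ 1 < ψ 0) : StrictAntiOn ψ (Icc 0 1) := fun s hs t ht hst => by
  obtain ⟨d, hds, hdt⟩ := h.exists_separating hs ht hst
  exact lt_of_not_ge fun hle => h10.not_ge
    (hds.symm.trans_le ((d.2.1.1 (hmaps hs) (hmaps ht) hle).trans_eq hdt))

lemma surjOn (h : NormalizesDFs ψ) {w : ℝ} (hw : w ∈ Icc (0 : ℝ) 1)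
    (hψw : ψ w ∈ Ioo (0 : ℝ) 1) : SurjOn ψ (Icc 0 1) (Icc 0 1) := fun y hy => by
  obtain ⟨d', hd'⟩ := RightCtsDF.exists_apply_eq hψw hy
  obtain ⟨d, hd⟩ := h.2 d'
  exact ⟨d.1 w, d.2.1.mapsTo hw, (hd hw).symm.trans hd'⟩

lemma isHomeoDF (h : NormalizesDFs ψ) (hmaps : MapsTo ψ (Icc 0 1) (Icc 0 1)) (h0 : ψ 0 = 0)
    (h1 : ψ 1 = 1) : IsHomeoDF ψ := by
  have hmono := h.strictMonoOn hmaps (by rw [h0, h1]; exact one_pos)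
  have hhalf : (1 / 2 : ℝ) ∈ Icc (0 : ℝ) 1 := by norm_num
  refine isHomeoDF_of_surjOn hmono hmaps (h.surjOn hhalf ⟨?_, ?_⟩)
  · exact h0.symm.trans_lt (hmono (left_mem_Icc.2 zero_le_one) hhalf (by norm_num))
  · exact (hmono hhalf (right_mem_Icc.2 zero_le_one) (by norm_num)).trans_eq h1

/-- For decreasing `ψ` the partner `d` of the indicator of `[ψ (1/2), 1]` would be the indicator of
`(1/2, 1]`, which is not right-continuous. -/
lemma not_decreasing (h : NormalizesDFs ψ) (hmaps : MapsTo ψ (Icc 0 1) (Icc 0 1)) (h0 : ψ 0 = 1)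
    (h1 : ψ 1 = 0) : False := by
  have hanti := h.strictAntiOn hmaps (by rw [h0, h1]; exact one_pos)
  have hhalf : (1 / 2 : ℝ) ∈ Icc (0 : ℝ) 1 := by norm_num
  have hw : ψ (1 / 2) ∈ Ioc (0 : ℝ) 1 :=
    ⟨h1.symm.trans_lt (hanti hhalf (right_mem_Icc.2 zero_le_one) (by norm_num)), (hmaps hhalf).2⟩
  obtain ⟨d, hd⟩ := h.2 (RightCtsDF.step hw)
  have hd_half : d.1 (1 / 2) = 0 :=
    hanti.injOn (d.2.1.mapsTo hhalf) (left_mem_Icc.2 zero_le_one)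
      ((hd hhalf).symm.trans ((stepFn_of_le le_rfl).trans h0.symm))
  have hd_right : ∀ t ∈ Ioc (1 / 2 : ℝ) 1, d.1 t = 1 := fun t ht => by
    have ht' : t ∈ Icc (0 : ℝ) 1 := ⟨hhalf.1.trans ht.1.le, ht.2⟩
    exact hanti.injOn (d.2.1.mapsTo ht') (right_mem_Icc.2 zero_le_one)
      ((hd ht').symm.trans ((stepFn_of_lt (hanti hhalf ht' ht.1)).trans h1.symm))
  have hlim : Tendsto d.1 (𝓝[>] (1 / 2)) (𝓝 1) := by
    refine tendsto_const_nhds.congr' ?_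
    filter_upwards [Ioc_mem_nhdsGT (show (1 / 2 : ℝ) < 1 by norm_num)] with t ht
    exact (hd_right t ht).symm
  have heq := tendsto_nhds_unique (d.2.2 (1 / 2) (by norm_num)) hlim
  rw [hd_half] at heq
  exact zero_ne_one heq

end NormalizesDFs

/-! ### Transforms commuting with the distortions -/

/-- `T_{d'} ∘ T = T ∘ T_d` on `M`; by `RightCtsDF.distortT_eq_comp`, applying `T_d` to a cdf is
composition with `d`. -/
def Intertwines (T : (ℝ → ℝ) → ℝ → ℝ) (d d' : RightCtsDF) : Prop :=
  ∀ F ∈ mSet, d'.1 ∘ T F = T (d.1 ∘ F)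

/-- `T` commutes with the set `𝒟^R`. -/
def CommutesWithDistortions (T : (ℝ → ℝ) → ℝ → ℝ) : Prop :=
  Relator.BiTotal (Intertwines T)

/-- The left quantile functions satisfy `Q_{T F} ∘ ψ = u ∘ Q_F` on `(0, 1]`. -/
def TransformsQuantiles (T : (ℝ → ℝ) → ℝ → ℝ) (ψ u : ℝ → ℝ) : Prop :=
  ∀ F ∈ mSet, ∀ p ∈ Ioc (0 : ℝ) 1, leftQ (T F) (ψ p) = u (leftQ F p)

/-- The location of `T δ_x`, provided that `T δ_x` is a point mass. -/
def pointMap (T : (ℝ → ℝ) → ℝ → ℝ) (x : ℝ) : ℝ := leftQ (T (stepFn x)) 1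

section Transforms

variable {T : (ℝ → ℝ) → ℝ → ℝ} {ψ u : ℝ → ℝ}

lemma commutesWithDistortions_iff_distortT (hT : MapsTo T mSet mSet) :
    CommutesWithDistortions T ↔ Relator.BiTotal fun d d' : RightCtsDF =>
      ∀ F ∈ mSet, distortT d'.1 (T F) = T (distortT d.1 F) := by
  have hiff : ∀ d d' : RightCtsDF, Intertwines T d d' ↔
      ∀ F ∈ mSet, distortT d'.1 (T F) = T (distortT d.1 F) := fun d d' =>
    forall₂_congr fun F hF => by rw [d'.distortT_eq_comp (hT hF), d.distortT_eq_comp hF]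
  exact ⟨fun h => biTotal_of_imp h fun d d' => (hiff d d').1,
    fun h => biTotal_of_imp h fun d d' => (hiff d d').2⟩

lemma commutesWithDistortions_of_eq_comp_utilityT (hψ : IsHomeoDF ψ) (hu : IsLeftCtsIncr u)
    (h : ∀ F ∈ mSet, T F = ψ ∘ utilityT u F) : CommutesWithDistortions T := by
  refine biTotal_of_imp hψ.normalizesDFs fun d d' hdd' F hF => ?_
  rw [h F hF, h _ (d.comp_mem_mSet hF), utilityT_comp hu d hF]
  exact funext fun x => hdd' (mem_Icc_of_mem_mSet (utilityT_mem_mSet hu.1 hF) x)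

namespace TransformsQuantiles

lemma continuousWithinAt_Iic (h : TransformsQuantiles T ψ u) (hT : MapsTo T mSet mSet)
    (hψ : IsHomeoDF ψ) (x : ℝ) : ContinuousWithinAt u (Iic x) x := by
  obtain ⟨c, rfl⟩ : ∃ c, x = c + 1 := ⟨x - 1, (sub_add_cancel x 1).symm⟩
  have hone : (1 : ℝ) ∈ Icc (0 : ℝ) 1 := right_mem_Icc.2 zero_le_one
  have hF := uniformCdf_mem_mSet c
  have hshift : MapsTo (fun y => y - c) (Ioc c (c + 1)) (Ioc 0 1) := fun y hy =>
    ⟨sub_pos.2 hy.1, sub_le_iff_le_add'.2 hy.2⟩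
  have hu : ∀ y ∈ Ioc c (c + 1), u y = leftQ (T (uniformCdf c)) (ψ (y - c)) := fun y hy => by
    rw [h _ hF _ (hshift hy), leftQ_uniformCdf c (hshift hy), add_sub_cancel]
  have hleftQ : ContinuousWithinAt (leftQ (T (uniformCdf c))) (Iic (ψ 1)) (ψ 1) := by
    rw [hψ.1.2.2]
    exact continuousWithinAt_leftQ (hT hF) (right_mem_Ioc.2 one_pos)
  have hlevel : ContinuousWithinAt (fun p => leftQ (T (uniformCdf c)) (ψ p)) (Ioc 0 1) 1 :=
    hleftQ.comp ((hψ.2.2 1 hone).mono Ioc_subset_Icc_self) fun p hp =>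
      hψ.1.1 (Ioc_subset_Icc_self hp) hone hp.2
  rw [← continuousWithinAt_Ioc_iff_Iic (lt_add_one c)]
  exact (hlevel.comp_of_eq (f := fun y => y - c) (by fun_prop) hshift
    (add_sub_cancel_left c 1)).congr hu (hu _ (right_mem_Ioc.2 (lt_add_one c)))

lemma eq_comp_utilityT (h : TransformsQuantiles T ψ u) (hT : MapsTo T mSet mSet)
    (hψ : IsHomeoDF ψ) (hu : IsLeftCtsIncr u) {F : ℝ → ℝ} (hF : F ∈ mSet) :
    T F = ψ ∘ utilityT u F := by
  have huF := utilityT_mem_mSet hu.1 hF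
  refine eq_of_leftQ_eq (hT hF) (hψ.toRightCtsDF.comp_mem_mSet huF) fun r hr => ?_
  obtain ⟨p, hp, rfl⟩ := hψ.surjOn (Ioc_subset_Icc_self hr)
  have hp' := (hψ.mem_Ioc_iff hp).1 hr
  calc leftQ (T F) (ψ p) = u (leftQ F p) := h F hF p hp'
    _ = leftQ (utilityT u F) p := (leftQ_utilityT hu hF hp').symm
    _ = leftQ (ψ ∘ utilityT u F) (ψ p) := (hψ.leftQ_comp huF hp).symm

end TransformsQuantiles

lemma Intertwines.eqOn_twoPoint {d d' : RightCtsDF} (h : Intertwines T d d') {a b : ℝ}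
    (hab : a ≤ b) (x : ℝ) :
    EqOn (d'.1 ∘ fun t => T (twoPoint a b t) x) ((fun t => T (twoPoint a b t) x) ∘ d.1)
      (Icc 0 1) := fun t ht => by
  have hx := congrFun (h _ (twoPoint_mem_mSet a b ht)) x
  rwa [d.2.1.comp_twoPoint hab] at hx

lemma mapsTo_twoPoint (hT : MapsTo T mSet mSet) (a b x : ℝ) :
    MapsTo (fun t => T (twoPoint a b t) x) (Icc 0 1) (Icc 0 1) := fun _ ht =>
  mem_Icc_of_mem_mSet (hT (twoPoint_mem_mSet a b ht)) x

namespace CommutesWithDistortions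

lemma map_stepFn (h : CommutesWithDistortions T) (hT : MapsTo T mSet mSet) (x : ℝ) :
    T (stepFn x) = stepFn (pointMap T x) := by
  have hone : (1 : ℝ) ∈ Ioc (0 : ℝ) 1 := right_mem_Ioc.2 one_pos
  obtain ⟨d, hd⟩ := h.2 (RightCtsDF.step hone)
  calc T (stepFn x) = T (d.1 ∘ stepFn x) := by rw [d.2.1.comp_stepFn]
    _ = stepFn 1 ∘ T (stepFn x) := (hd _ (stepFn_mem_mSet x)).symm
    _ = stepFn (pointMap T x) := stepFn_comp (hT (stepFn_mem_mSet x)) hone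

lemma exists_leftQ_eq_pointMap (h : CommutesWithDistortions T) (hT : MapsTo T mSet mSet)
    {F : ℝ → ℝ} (hF : F ∈ mSet) {p : ℝ} (hp : p ∈ Ioc (0 : ℝ) 1) :
    ∃ x, leftQ (T F) p = pointMap T x := by
  have hone : (1 : ℝ) ∈ Ioc (0 : ℝ) 1 := right_mem_Ioc.2 one_pos
  obtain ⟨d, hd⟩ := h.2 (RightCtsDF.step hp)
  obtain ⟨e, he⟩ := h.1 (RightCtsDF.step hone)
  have hdF := d.comp_mem_mSet hF
  refine ⟨leftQ (d.1 ∘ F) 1, stepFn_injective ?_⟩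
  calc stepFn (leftQ (T F) p) = e.1 ∘ stepFn (leftQ (T F) p) := (e.2.1.comp_stepFn _).symm
    _ = e.1 ∘ (stepFn p ∘ T F) := by rw [stepFn_comp (hT hF) hp]
    _ = e.1 ∘ T (d.1 ∘ F) := congrArg (e.1 ∘ ·) (hd F hF)
    _ = T (stepFn 1 ∘ d.1 ∘ F) := he _ hdF
    _ = T (stepFn (leftQ (d.1 ∘ F) 1)) := by rw [stepFn_comp hdF hone]
    _ = stepFn (pointMap T (leftQ (d.1 ∘ F) 1)) := h.map_stepFn hT _

lemma normalizesDFs_twoPoint (h : CommutesWithDistortions T) {a b : ℝ} (hab : a ≤ b) (x : ℝ) :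
    NormalizesDFs fun t => T (twoPoint a b t) x :=
  biTotal_of_imp h fun _ _ hdd' => hdd'.eqOn_twoPoint hab x

lemma monotone_pointMap (h : CommutesWithDistortions T) (hT : MapsTo T mSet mSet) :
    Monotone (pointMap T) := by
  intro a b hab
  by_contra! hlt
  refine (h.normalizesDFs_twoPoint hab (pointMap T b)).not_decreasing
    (mapsTo_twoPoint hT a b _) ?_ ?_
  · rw [twoPoint_zero, h.map_stepFn hT, stepFn_of_le le_rfl]
  · rw [twoPoint_one, h.map_stepFn hT, stepFn_of_lt hlt]

lemma isHomeoDF_and_transformsQuantiles_twoPoint (h : CommutesWithDistortions T)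
    (hT : MapsTo T mSet mSet) {a b : ℝ} (hlt : pointMap T a < pointMap T b) :
    IsHomeoDF (fun t => T (twoPoint a b t) (pointMap T a)) ∧
      TransformsQuantiles T (fun t => T (twoPoint a b t) (pointMap T a)) (pointMap T) := by
  set ψ : ℝ → ℝ := fun t => T (twoPoint a b t) (pointMap T a) with hψ_def
  have hab : a ≤ b := ((h.monotone_pointMap hT).reflect_lt hlt).le
  have h0 : ψ 0 = 0 := by
    simp only [hψ_def, twoPoint_zero, h.map_stepFn hT, stepFn_of_lt hlt]
  have h1 : ψ 1 = 1 := by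
    simp only [hψ_def, twoPoint_one, h.map_stepFn hT, stepFn_of_le le_rfl]
  have hψ : IsHomeoDF ψ :=
    (h.normalizesDFs_twoPoint hab _).isHomeoDF (mapsTo_twoPoint hT a b _) h0 h1
  refine ⟨hψ, fun F hF p hp => stepFn_injective ?_⟩
  have hp' := Ioc_subset_Icc_self hp
  obtain ⟨d', hd'⟩ := h.1 (RightCtsDF.step hp)
  have hstep : EqOn d'.1 (stepFn (ψ p)) (Icc 0 1) :=
    hψ.eqOn_stepFn hp' (hd'.eqOn_twoPoint hab _)
  calc stepFn (leftQ (T F) (ψ p)) = stepFn (ψ p) ∘ T F :=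
        (stepFn_comp (hT hF) ((hψ.mem_Ioc_iff hp').2 hp)).symm
    _ = d'.1 ∘ T F := funext fun x => (hstep (mem_Icc_of_mem_mSet (hT hF) x)).symm
    _ = T (stepFn p ∘ F) := hd' F hF
    _ = T (stepFn (leftQ F p)) := by rw [stepFn_comp hF hp]
    _ = stepFn (pointMap T (leftQ F p)) := h.map_stepFn hT _

lemma exists_transformsQuantiles (h : CommutesWithDistortions T) (hT : MapsTo T mSet mSet) :
    ∃ ψ, IsHomeoDF ψ ∧ TransformsQuantiles T ψ (pointMap T) := by
  by_cases hconst : ∀ a b, pointMap T a = pointMap T b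
  · refine ⟨id, isHomeoDF_id, fun F hF p hp => ?_⟩
    obtain ⟨x, hx⟩ := h.exists_leftQ_eq_pointMap hT hF hp
    exact hx.trans (hconst _ _)
  · push Not at hconst
    obtain ⟨a, b, hne⟩ := hconst
    rcases hne.lt_or_gt with hlt | hlt
    · exact ⟨_, h.isHomeoDF_and_transformsQuantiles_twoPoint hT hlt⟩
    · exact ⟨_, h.isHomeoDF_and_transformsQuantiles_twoPoint hT hlt⟩

end CommutesWithDistortions

end Transforms

theorem stmt4_general (T : (ℝ → ℝ) → ℝ → ℝ) (hT : ∀ F ∈ mSet, T F ∈ mSet) :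
    ((∀ d : ℝ → ℝ, IsDF d → DFRightCts d → ∃ d' : ℝ → ℝ, IsDF d' ∧ DFRightCts d' ∧
        ∀ F ∈ mSet, distortT d' (T F) = T (distortT d F)) ∧
      (∀ d' : ℝ → ℝ, IsDF d' → DFRightCts d' → ∃ d : ℝ → ℝ, IsDF d ∧ DFRightCts d ∧
        ∀ F ∈ mSet, distortT d' (T F) = T (distortT d F))) ↔
      ∃ d u : ℝ → ℝ, IsLeftCtsIncr u ∧ IsDF d ∧ StrictMonoOn d (Set.Icc 0 1) ∧
        ContinuousOn d (Set.Icc 0 1) ∧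
        ∀ F ∈ mSet, T F = distortT d (utilityT u F) := by
  trans CommutesWithDistortions T
  · rw [commutesWithDistortions_iff_distortT hT]
    simp only [Relator.BiTotal, Relator.LeftTotal, Relator.RightTotal, Subtype.forall,
      Subtype.exists, and_imp, exists_prop, and_assoc]
  constructor
  · intro h
    obtain ⟨ψ, hψ, hquant⟩ := h.exists_transformsQuantiles hT
    have hu : IsLeftCtsIncr (pointMap T) :=
      ⟨h.monotone_pointMap hT, hquant.continuousWithinAt_Iic hT hψ⟩
    refine ⟨ψ, pointMap T, hu, hψ.1, hψ.2.1, hψ.2.2, fun F hF => ?_⟩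
    exact (hquant.eq_comp_utilityT hT hψ hu hF).trans
      (hψ.toRightCtsDF.distortT_eq_comp (utilityT_mem_mSet hu.1 hF)).symm
  · rintro ⟨ψ, u, hu, hdf, hmono, hcont, hfac⟩
    have hψ : IsHomeoDF ψ := ⟨hdf, hmono, hcont⟩
    exact commutesWithDistortions_of_eq_comp_utilityT hψ hu fun F hF => (hfac F hF).trans
      (hψ.toRightCtsDF.distortT_eq_comp (utilityT_mem_mSet hu.1 hF))

/-- A monotone map `T : M → M` commutes with the set `𝒟^R` of probability
distortions generated by right-continuous distortion functions
(`𝒟^R ∘ T = T ∘ 𝒟^R` as sets of maps `M → M`) if and only if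
`T = T_d ∘ T^u` for some increasing left-continuous `u : ℝ → ℝ` and some
strictly increasing continuous distortion function `d`. -/
theorem stmt4 (T : (ℝ → ℝ) → ℝ → ℝ) (hT : ∀ F ∈ mSet, T F ∈ mSet)
    (hmono : ∀ F ∈ mSet, ∀ G ∈ mSet, (∀ x, G x ≤ F x) → ∀ x, T G x ≤ T F x) :
    ((∀ d : ℝ → ℝ, IsDF d → DFRightCts d → ∃ d' : ℝ → ℝ, IsDF d' ∧ DFRightCts d' ∧
        ∀ F ∈ mSet, distortT d' (T F) = T (distortT d F)) ∧
      (∀ d' : ℝ → ℝ, IsDF d' → DFRightCts d' → ∃ d : ℝ → ℝ, IsDF d ∧ DFRightCts d ∧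
        ∀ F ∈ mSet, distortT d' (T F) = T (distortT d F))) ↔
      ∃ d u : ℝ → ℝ, IsLeftCtsIncr u ∧ IsDF d ∧ StrictMonoOn d (Set.Icc 0 1) ∧
        ContinuousOn d (Set.Icc 0 1) ∧
        ∀ F ∈ mSet, T F = distortT d (utilityT u F) := stmt4_general T hT
end
end
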